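/- arXiv:math/0507237 — 5 statements merged into one kernel-verified Lean document; each statement's English description precedes it below -/
import Mathlib

section
/- Let 0 → {M'_n, α'_n} → {M_n, α_n} → {M''_n, α''_n} → 0 be a pro-exact sequence of pro-R-modules with strict homomorphisms {f_n} and {g_n} (meaning: {ker f_n} is pro-trivial, g_n ∘ f_n = 0 with {ker(g_n)/im(f_n)} pro-trivial, and {coker g_n} is pro-trivial). Then there is a natural exact sequence of R-modules 0 → lim_n M'_n → lim_n M_n → lim_n M''_n → lim¹_n M'_n → lim¹_n M_n → lim¹_n M''_n → 0, where the maps between the limits and between the derived limits are induced by {f_n} and {g_n}, together with a connecting homomorphism δ : lim_n M''_n → lim¹_n M'_n. -/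
/-!
The limit and derived limit are the kernel and cokernel of the shift map `φ = 1 - σ` on `∏ₙ Mₙ`,
where `σ` applies the transition maps, so the six term sequence is a snake lemma sequence for `φ`
acting on `∏ M'ₙ → ∏ Mₙ → ∏ M''ₙ`. This sequence of products is not short exact, but its homology
consists of the products of the pro-trivial systems `{ker fₙ}`, `{ker gₙ / im fₙ}` and
`{coker gₙ}`.

On the product of a pro-trivial system `φ` is bijective, with inverse the geometric series
`∑ᵢ σⁱ`, which is a finite sum in each component. This is proved for subquotients `Uₙ / Vₙ` of a
system in `proShift_injective_mod` and `proShift_surjective_mod`. A diagram chase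
(`snake_of_bijective_on_homology`) shows that the snake lemma only needs this bijectivity on the
homology instead of short exactness. The connecting map sends `G m` to the class of `a` whenever
`φ m = F a`, where `F` and `G` are the products of the `fₙ` and `gₙ`.
-/

section ProModules

variable {R : Type*} [CommRing R]

/-- The composite transition map `M (m + k) →ₗ[R] M m` of an inverse system. -/
def transMap {M : ℕ → Type*} [∀ n, AddCommGroup (M n)]
    [∀ n, Module R (M n)] (α : ∀ n, M (n + 1) →ₗ[R] M n) :
    ∀ m k : ℕ, M (m + k) →ₗ[R] M m
  | _, 0 => LinearMap.id
  | m, (k + 1) => (transMap α m k).comp (α (m + k))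

/-- The shift map `Φ : ∏ₙ Mₙ → ∏ₙ Mₙ`, `(xₙ)ₙ ↦ (xₙ − α_{n+1}(x_{n+1}))ₙ`, whose kernel
and cokernel are by definition `lim Mₙ` and `lim¹ Mₙ`. -/
def proShift {M : ℕ → Type*} [∀ n, AddCommGroup (M n)]
    [∀ n, Module R (M n)] (α : ∀ n, M (n + 1) →ₗ[R] M n) :
    (∀ n, M n) →ₗ[R] (∀ n, M n) where
  toFun x := fun n => x n - α n (x (n + 1))
  map_add' x y := by
    funext n
    simp only [Pi.add_apply, map_add]
    abel
  map_smul' c x := by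
    funext n
    simp [smul_sub]

/-- `lim Mₙ`, the inverse limit of the system, i.e. the kernel of `proShift α`. -/
def ProLim {M : ℕ → Type*} [∀ n, AddCommGroup (M n)]
    [∀ n, Module R (M n)] (α : ∀ n, M (n + 1) →ₗ[R] M n) : Type _ :=
  LinearMap.ker (proShift α)

instance {M : ℕ → Type*} [∀ n, AddCommGroup (M n)] [∀ n, Module R (M n)]
    (α : ∀ n, M (n + 1) →ₗ[R] M n) : AddCommGroup (ProLim α) := by
  unfold ProLim; infer_instance

instance {M : ℕ → Type*} [∀ n, AddCommGroup (M n)] [∀ n, Module R (M n)]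
    (α : ∀ n, M (n + 1) →ₗ[R] M n) : Module R (ProLim α) := by
  unfold ProLim; infer_instance

/-- `lim¹ Mₙ`, the derived limit of the system, i.e. the cokernel of `proShift α`. -/
def ProLim1 {M : ℕ → Type*} [∀ n, AddCommGroup (M n)]
    [∀ n, Module R (M n)] (α : ∀ n, M (n + 1) →ₗ[R] M n) : Type _ :=
  (∀ n, M n) ⧸ LinearMap.range (proShift α)

instance {M : ℕ → Type*} [∀ n, AddCommGroup (M n)] [∀ n, Module R (M n)]
    (α : ∀ n, M (n + 1) →ₗ[R] M n) : AddCommGroup (ProLim1 α) := by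
  unfold ProLim1; infer_instance

instance {M : ℕ → Type*} [∀ n, AddCommGroup (M n)] [∀ n, Module R (M n)]
    (α : ∀ n, M (n + 1) →ₗ[R] M n) : Module R (ProLim1 α) := by
  unfold ProLim1; infer_instance

/-- The map `∏ₙ Mₙ → ∏ₙ Nₙ` given componentwise by a family `fₙ : Mₙ → Nₙ`. -/
def piMapL {M N : ℕ → Type*} [∀ n, AddCommGroup (M n)] [∀ n, Module R (M n)]
    [∀ n, AddCommGroup (N n)] [∀ n, Module R (N n)]
    (f : ∀ n, M n →ₗ[R] N n) : (∀ n, M n) →ₗ[R] (∀ n, N n) :=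
  LinearMap.pi fun n => (f n).comp (LinearMap.proj n)

/-- A strict homomorphism `{fₙ}` of pro-`R`-modules commutes with the shift maps. -/
theorem proShift_comm {M N : ℕ → Type*} [∀ n, AddCommGroup (M n)] [∀ n, Module R (M n)]
    [∀ n, AddCommGroup (N n)] [∀ n, Module R (N n)]
    (α : ∀ n, M (n + 1) →ₗ[R] M n) (β : ∀ n, N (n + 1) →ₗ[R] N n)
    (f : ∀ n, M n →ₗ[R] N n)
    (hf : ∀ n, (f n).comp (α n) = (β n).comp (f (n + 1))) (x : ∀ n, M n) :
    proShift β (piMapL f x) = piMapL f (proShift α x) := by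
  funext n
  have := congrArg (fun φ => φ (x (n + 1))) (hf n)
  simp only [LinearMap.comp_apply] at this
  simp [proShift, piMapL, this]

/-- The map `lim Mₙ → lim Nₙ` induced by a strict homomorphism `{fₙ}`. -/
def limMap {M N : ℕ → Type*} [∀ n, AddCommGroup (M n)] [∀ n, Module R (M n)]
    [∀ n, AddCommGroup (N n)] [∀ n, Module R (N n)]
    (α : ∀ n, M (n + 1) →ₗ[R] M n) (β : ∀ n, N (n + 1) →ₗ[R] N n)
    (f : ∀ n, M n →ₗ[R] N n)
    (hf : ∀ n, (f n).comp (α n) = (β n).comp (f (n + 1))) :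
    ProLim α →ₗ[R] ProLim β :=
  (piMapL f).restrict (p := LinearMap.ker (proShift α)) (q := LinearMap.ker (proShift β))
    (fun x hx => by
      simp only [LinearMap.mem_ker] at hx ⊢
      rw [proShift_comm α β f hf, hx, map_zero])

/-- The map `lim¹ Mₙ → lim¹ Nₙ` induced by a strict homomorphism `{fₙ}`. -/
def lim1Map {M N : ℕ → Type*} [∀ n, AddCommGroup (M n)] [∀ n, Module R (M n)]
    [∀ n, AddCommGroup (N n)] [∀ n, Module R (N n)]
    (α : ∀ n, M (n + 1) →ₗ[R] M n) (β : ∀ n, N (n + 1) →ₗ[R] N n)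
    (f : ∀ n, M n →ₗ[R] N n)
    (hf : ∀ n, (f n).comp (α n) = (β n).comp (f (n + 1))) :
    ProLim1 α →ₗ[R] ProLim1 β :=
  Submodule.mapQ (LinearMap.range (proShift α)) (LinearMap.range (proShift β)) (piMapL f)
    (by
      rintro x ⟨y, rfl⟩
      exact ⟨piMapL f y, proShift_comm α β f hf y⟩)

end ProModules

section ProofOfSixTerm

variable {R : Type*} [CommRing R]

section Snake

variable {P' P P'' : Type*} [AddCommGroup P'] [Module R P'] [AddCommGroup P'']
  [Module R P''] [AddCommGroup P] [Module R P]

/-- A snake lemma for endomorphisms `φ'`, `φ`, `φ''` and compatible maps `F`, `G` with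
`G ∘ F = 0`, where `P' → P → P''` need not be short exact. It suffices that the endomorphisms
induced on the three homology modules are bijective, which is what the six hypotheses `K1`, `K2`
(on `ker F`), `C1`, `C2` (on `ker G / im F`) and `D1`, `D2` (on `coker G`) express: `1` is
injectivity and `2` is surjectivity. -/
theorem snake_of_bijective_on_homology (φ' : P' →ₗ[R] P') (φ : P →ₗ[R] P) (φ'' : P'' →ₗ[R] P'')
    (F : P' →ₗ[R] P) (G : P →ₗ[R] P'')
    (hF : ∀ x, φ (F x) = F (φ' x)) (hG : ∀ x, φ'' (G x) = G (φ x))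
    (hGF : ∀ x, G (F x) = 0)
    (K1 : ∀ x, F x = 0 → φ' x = 0 → x = 0)
    (K2 : ∀ y, F y = 0 → ∃ x, F x = 0 ∧ φ' x = y)
    (C1 : ∀ y, G y = 0 → (∃ a, F a = φ y) → ∃ b, F b = y)
    (C2 : ∀ y, G y = 0 → ∃ x, G x = 0 ∧ ∃ a, F a = y - φ x)
    (D1 : ∀ z, (∃ m, G m = φ'' z) → ∃ n, G n = z)
    (D2 : ∀ z, ∃ w m, G m = z - φ'' w)
    (rF : ∀ x ∈ LinearMap.ker φ', F x ∈ LinearMap.ker φ)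
    (rG : ∀ x ∈ LinearMap.ker φ, G x ∈ LinearMap.ker φ'')
    (qF : LinearMap.range φ' ≤ (LinearMap.range φ).comap F)
    (qG : LinearMap.range φ ≤ (LinearMap.range φ'').comap G) :
    ∃ δ : LinearMap.ker φ'' →ₗ[R] P' ⧸ LinearMap.range φ',
      Function.Injective (F.restrict rF) ∧
      Function.Exact (F.restrict rF) (G.restrict rG) ∧
      Function.Exact (G.restrict rG) δ ∧
      Function.Exact δ (Submodule.mapQ _ _ F qF) ∧
      Function.Exact (Submodule.mapQ _ _ F qF) (Submodule.mapQ _ _ G qG) ∧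
      Function.Surjective (Submodule.mapQ _ _ G qG) := by
  -- The connecting map sends `G m` to the class of `a` whenever `φ m = F a`. It is obtained by
  -- descending the second projection of the module `S` of such pairs `(m, a)` along the
  -- surjection `p : S → ker φ''`.
  let S : Submodule R (P × P') :=
    LinearMap.ker (φ.comp (LinearMap.fst R P P') - F.comp (LinearMap.snd R P P'))
  have memS : ∀ s : P × P', s ∈ S ↔ φ s.1 = F s.2 := by
    intro s
    simp [S, sub_eq_zero]
  let p : S →ₗ[R] LinearMap.ker φ'' :=
    ((G.comp (LinearMap.fst R P P')).comp S.subtype).codRestrict _ (by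
      rintro ⟨s, hs⟩
      have hs' := (memS s).1 hs
      simp [hG, hs', hGF])
  let q : S →ₗ[R] P' ⧸ LinearMap.range φ' :=
    ((Submodule.mkQ _).comp (LinearMap.snd R P P')).comp S.subtype
  have p_surj : Function.Surjective p := by
    rintro ⟨z, hz⟩
    obtain ⟨m, rfl⟩ := D1 z ⟨0, by simpa using hz.symm⟩
    obtain ⟨x, hx, a, ha⟩ := C2 (φ m) (by rw [← hG]; exact hz)
    refine ⟨⟨(m - x, a), (memS _).2 (by simp [ha])⟩, Subtype.ext ?_⟩
    simp [p, hx]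
  have hpq : LinearMap.ker p ≤ LinearMap.ker q := by
    rintro ⟨⟨m, a⟩, hs⟩ h
    have h1 : φ m = F a := (memS _).1 hs
    have h2 : G m = 0 := congrArg Subtype.val h
    obtain ⟨b, rfl⟩ := C1 m h2 ⟨a, h1.symm⟩
    obtain ⟨x, -, hx⟩ := K2 (a - φ' b) (by rw [map_sub, ← h1, hF, sub_self])
    exact (Submodule.Quotient.mk_eq_zero _).2 ⟨b + x, by rw [map_add, hx]; abel⟩
  let δ : LinearMap.ker φ'' →ₗ[R] P' ⧸ LinearMap.range φ' :=
    ((LinearMap.ker p).liftQ q hpq).comp (p.quotKerEquivOfSurjective p_surj).symm.toLinearMap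
  have hδ : ∀ s, δ (p s) = q s := by
    intro s
    have : (p.quotKerEquivOfSurjective p_surj).symm (p s) = Submodule.Quotient.mk s := by
      rw [LinearEquiv.symm_apply_eq]
      rfl
    simp only [δ, LinearMap.comp_apply, LinearEquiv.coe_coe, this]
    rfl
  refine ⟨δ, ?_, ?_, ?_, ?_, ?_, ?_⟩
  · rw [injective_iff_map_eq_zero]
    rintro ⟨x, hx⟩ h
    exact Subtype.ext (K1 x (congrArg Subtype.val h) hx)
  · rintro ⟨m, hm⟩
    constructor
    · intro h
      obtain ⟨b, rfl⟩ := C1 m (congrArg Subtype.val h) ⟨0, by simpa using hm.symm⟩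
      obtain ⟨x, hx, hx'⟩ := K2 (φ' b) (by rw [← hF]; exact hm)
      exact ⟨⟨b - x, by simp [hx']⟩, Subtype.ext (by simp [hx])⟩
    · rintro ⟨⟨b, hb⟩, h⟩
      obtain rfl : F b = m := congrArg Subtype.val h
      exact Subtype.ext (hGF b)
  · intro z
    constructor
    · intro h
      obtain ⟨s, rfl⟩ := p_surj z
      rw [hδ] at h
      obtain ⟨⟨m, a⟩, hs⟩ := s
      have h1 : φ m = F a := (memS _).1 hs
      obtain ⟨b, rfl⟩ := (Submodule.Quotient.mk_eq_zero _).1 h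
      refine ⟨⟨m - F b, by simp [h1, hF]⟩, Subtype.ext ?_⟩
      simp [p, hGF]
    · rintro ⟨⟨m, hm⟩, rfl⟩
      have hm' : φ m = 0 := hm
      have := hδ ⟨(m, 0), (memS _).2 (by simp [hm'])⟩
      exact this.trans (by simp [q])
  · intro c
    obtain ⟨a, rfl⟩ := Submodule.Quotient.mk_surjective _ c
    constructor
    · intro h
      obtain ⟨m, hm⟩ := (Submodule.Quotient.mk_eq_zero _).1 h
      exact ⟨_, hδ ⟨(m, a), (memS _).2 hm⟩⟩
    · rintro ⟨z, hz⟩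
      obtain ⟨s, rfl⟩ := p_surj z
      rw [hδ] at hz
      rw [← hz]
      exact (Submodule.Quotient.mk_eq_zero _).2 ⟨_, (memS _).1 s.2⟩
  · intro c
    obtain ⟨m, rfl⟩ := Submodule.Quotient.mk_surjective _ c
    constructor
    · intro h
      obtain ⟨z, hz⟩ := (Submodule.Quotient.mk_eq_zero _).1 h
      obtain ⟨n, rfl⟩ := D1 z ⟨m, hz.symm⟩
      obtain ⟨x, -, a, ha⟩ := C2 (m - φ n) (by rw [map_sub, ← hG, hz, sub_self])
      refine ⟨Submodule.Quotient.mk a, (Submodule.Quotient.eq _).2 ⟨-(n + x), ?_⟩⟩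
      rw [ha, map_neg, map_add]
      abel
    · rintro ⟨c, hc⟩
      obtain ⟨a, rfl⟩ := Submodule.Quotient.mk_surjective _ c
      rw [← hc]
      exact (Submodule.Quotient.mk_eq_zero _).2 ⟨0, by rw [map_zero, hGF]⟩
  · intro c
    obtain ⟨z, rfl⟩ := Submodule.Quotient.mk_surjective _ c
    obtain ⟨w, m, hm⟩ := D2 z
    refine ⟨Submodule.Quotient.mk m, (Submodule.Quotient.eq _).2 ⟨-w, ?_⟩⟩
    rw [hm, map_neg]
    abel

end Snake

section Subquotient

variable {M : ℕ → Type*} [∀ n, AddCommGroup (M n)] [∀ n, Module R (M n)]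
  (α : ∀ n, M (n + 1) →ₗ[R] M n)

/-- The map `σ : (xₙ)ₙ ↦ (α_{n+1}(x_{n+1}))ₙ` on `∏ₙ Mₙ`, so that `proShift α = 1 - σ`. -/
def proTrans : (∀ n, M n) →ₗ[R] (∀ n, M n) :=
  LinearMap.pi fun n => (α n).comp (LinearMap.proj (n + 1))

theorem proShift_eq (y : ∀ n, M n) : proShift α y = y - proTrans α y := rfl

/-- Composite transition maps are components of powers of `σ`; working with these powers avoids
casts between `M (m + 1 + k)` and `M (m + (k + 1))`. -/
theorem proTrans_pow_apply (k : ℕ) (y : ∀ n, M n) (m : ℕ) :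
    (proTrans α ^ k) y m = transMap α m k (y (m + k)) := by
  induction k generalizing y with
  | zero => rfl
  | succ k ih =>
    rw [pow_succ, Module.End.mul_apply, ih]
    rfl

theorem proTrans_pow_mem (U : ∀ n, Submodule R (M n)) (hU : ∀ n, ∀ x ∈ U (n + 1), α n x ∈ U n)
    (k : ℕ) (y : ∀ n, M n) (hy : ∀ n, y n ∈ U n) (n : ℕ) : (proTrans α ^ k) y n ∈ U n := by
  induction k generalizing n with
  | zero => exact hy n
  | succ k ih =>
    rw [pow_succ', Module.End.mul_apply]
    exact hU n _ (ih (n + 1))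

/-- If `{Uₙ / Vₙ}` is pro-trivial, the shift map is injective on `∏ₙ Uₙ / Vₙ`. -/
theorem proShift_injective_mod (U V : ∀ n, Submodule R (M n))
    (hV : ∀ n, ∀ x ∈ V (n + 1), α n x ∈ V n)
    (hUV : ∀ m, ∃ k, ∀ x ∈ U (m + k), transMap α m k x ∈ V m)
    (y : ∀ n, M n) (hy : ∀ n, y n ∈ U n) (h : ∀ n, proShift α y n ∈ V n) (m : ℕ) :
    y m ∈ V m := by
  -- `y - σᵏ y` is the sum of the `σⁱ (y - σ y)` for `i < k`.
  have key : ∀ k, (y - (proTrans α ^ k) y) m ∈ V m := by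
    intro k
    induction k with
    | zero => simp
    | succ k ih =>
      have h1 := proTrans_pow_mem α V hV k _ h m
      have h2 := (V m).add_mem ih h1
      rw [proShift_eq, map_sub, ← Module.End.mul_apply, ← pow_succ] at h2
      simpa using h2
  obtain ⟨k, hk⟩ := hUV m
  have h1 := hk _ (hy (m + k))
  rw [← proTrans_pow_apply] at h1
  simpa using (V m).add_mem (key k) h1

/-- If `{Uₙ / Vₙ}` is pro-trivial, the shift map is surjective on `∏ₙ Uₙ / Vₙ`: a preimage of `y`
is the geometric series `∑ᵢ σⁱ y`, which is a finite sum modulo `V` in every component. -/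
theorem proShift_surjective_mod (U V : ∀ n, Submodule R (M n))
    (hU : ∀ n, ∀ x ∈ U (n + 1), α n x ∈ U n) (hV : ∀ n, ∀ x ∈ V (n + 1), α n x ∈ V n)
    (hUV : ∀ m, ∃ k, ∀ x ∈ U (m + k), transMap α m k x ∈ V m)
    (y : ∀ n, M n) (hy : ∀ n, y n ∈ U n) :
    ∃ x : ∀ n, M n, (∀ n, x n ∈ U n) ∧ ∀ n, (y - proShift α x) n ∈ V n := by
  choose k hk using hUV
  let x : ∀ n, M n := fun n => ∑ i ∈ Finset.range (k n), (proTrans α ^ i) y n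
  have hx : ∀ n j, (∑ i ∈ Finset.range (k n + j), (proTrans α ^ i) y n) - x n ∈ V n := by
    intro n j
    rw [Finset.sum_range_add, add_sub_cancel_left]
    refine Submodule.sum_mem _ fun i _ => ?_
    rw [pow_add, Module.End.mul_apply, proTrans_pow_apply]
    exact hk n _ (proTrans_pow_mem α U hU i y hy _)
  refine ⟨x, fun n => Submodule.sum_mem _ fun i _ => proTrans_pow_mem α U hU i y hy n,
    fun n => ?_⟩
  -- Compare `x n` and `x (n + 1)` with partial sums of lengths `K + 1` and `K`, where
  -- `K = k n + k (n + 1)`; for these the series telescopes exactly.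
  have h1 := hx n (k (n + 1) + 1)
  have h2 := hV n _ (hx (n + 1) (k n))
  rw [← add_assoc, Finset.sum_range_succ'] at h1
  rw [add_comm (k (n + 1)), map_sub, map_sum] at h2
  have h3 := (V n).sub_mem h1 h2
  have e : ∀ i, (proTrans α ^ (i + 1)) y n = α n ((proTrans α ^ i) y (n + 1)) := by
    intro i
    rw [pow_succ', Module.End.mul_apply]
    rfl
  simp only [e, pow_zero, Module.End.one_apply] at h3
  convert h3 using 1
  change y n - (x n - α n (x (n + 1))) = _
  abel

end Subquotient

end ProofOfSixTerm

/-- Given a pro-exact sequence `0 → {M'ₙ} → {Mₙ} → {M''ₙ} → 0` of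
pro-`R`-modules with strict homomorphisms `{fₙ}`, `{gₙ}` (i.e. `{ker fₙ}` is pro-trivial,
`gₙ ∘ fₙ = 0` with `{ker gₙ / im fₙ}` pro-trivial, and `{coker gₙ}` pro-trivial), there is a
connecting homomorphism `δ : lim M''ₙ → lim¹ M'ₙ` making the six term sequence
`0 → lim M'ₙ → lim Mₙ → lim M''ₙ → lim¹ M'ₙ → lim¹ Mₙ → lim¹ M''ₙ → 0` exact,
where the other maps are induced by `{fₙ}` and `{gₙ}`. -/
theorem sixTerm_limit_sequence {R : Type*} [CommRing R] {M' M M'' : ℕ → Type*}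
    [∀ n, AddCommGroup (M' n)] [∀ n, Module R (M' n)]
    [∀ n, AddCommGroup (M n)] [∀ n, Module R (M n)]
    [∀ n, AddCommGroup (M'' n)] [∀ n, Module R (M'' n)]
    (α' : ∀ n, M' (n + 1) →ₗ[R] M' n) (α : ∀ n, M (n + 1) →ₗ[R] M n)
    (α'' : ∀ n, M'' (n + 1) →ₗ[R] M'' n)
    (f : ∀ n, M' n →ₗ[R] M n) (g : ∀ n, M n →ₗ[R] M'' n)
    (hf : ∀ n, (f n).comp (α' n) = (α n).comp (f (n + 1)))
    (hg : ∀ n, (g n).comp (α n) = (α'' n).comp (g (n + 1)))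
    -- `{ker fₙ}` is pro-trivial:
    (hker : ∀ m : ℕ, ∃ k : ℕ, ∀ x : M' (m + k), f (m + k) x = 0 → transMap α' m k x = 0)
    -- `gₙ ∘ fₙ = 0` and the homology system `{ker gₙ / im fₙ}` is pro-trivial:
    (hgf : ∀ n, (g n).comp (f n) = 0)
    (hmid : ∀ m : ℕ, ∃ k : ℕ, ∀ x : M (m + k), g (m + k) x = 0 →
      ∃ y : M' m, f m y = transMap α m k x)
    -- `{coker gₙ}` is pro-trivial:
    (hcoker : ∀ m : ℕ, ∃ k : ℕ, ∀ z : M'' (m + k), ∃ x : M m, g m x = transMap α'' m k z) :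
    ∃ δ : ProLim α'' →ₗ[R] ProLim1 α',
      Function.Injective (limMap α' α f hf) ∧
      Function.Exact (limMap α' α f hf) (limMap α α'' g hg) ∧
      Function.Exact (limMap α α'' g hg) δ ∧
      Function.Exact δ (lim1Map α' α f hf) ∧
      Function.Exact (lim1Map α' α f hf) (lim1Map α α'' g hg) ∧
      Function.Surjective (lim1Map α α'' g hg) := by
  have hf' : ∀ n x, f n (α' n x) = α n (f (n + 1) x) := fun n x => LinearMap.congr_fun (hf n) x
  have hg' : ∀ n x, g n (α n x) = α'' n (g (n + 1) x) := fun n x => LinearMap.congr_fun (hg n) x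
  have hgf' : ∀ n x, g n (f n x) = 0 := fun n x => LinearMap.congr_fun (hgf n) x
  -- Stability of kernels and images under the transition maps.
  have sKf : ∀ n, ∀ x ∈ LinearMap.ker (f (n + 1)), α' n x ∈ LinearMap.ker (f n) := by
    intro n x hx
    rw [LinearMap.mem_ker] at hx ⊢
    rw [hf', hx, map_zero]
  have sRf : ∀ n, ∀ x ∈ LinearMap.range (f (n + 1)), α n x ∈ LinearMap.range (f n) := by
    rintro n _ ⟨y, rfl⟩
    exact ⟨α' n y, hf' n y⟩
  have sRg : ∀ n, ∀ x ∈ LinearMap.range (g (n + 1)), α'' n x ∈ LinearMap.range (g n) := by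
    rintro n _ ⟨y, rfl⟩
    exact ⟨α n y, hg' n y⟩
  have sKg : ∀ n, ∀ x ∈ LinearMap.ker (g (n + 1)), α n x ∈ LinearMap.ker (g n) := by
    intro n x hx
    rw [LinearMap.mem_ker] at hx ⊢
    rw [hg', hx, map_zero]
  -- An element of the product lies in the image of the product map iff it does so componentwise.
  have rangeF : ∀ y : ∀ n, M n, (∀ n, y n ∈ LinearMap.range (f n)) → ∃ a, piMapL f a = y := by
    intro y hy
    choose a ha using hy
    exact ⟨a, funext ha⟩
  have rangeG : ∀ z : ∀ n, M'' n, (∀ n, z n ∈ LinearMap.range (g n)) → ∃ a, piMapL g a = z := by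
    intro y hy
    choose a ha using hy
    exact ⟨a, funext ha⟩
  have tK : ∀ m, ∃ k, ∀ x ∈ LinearMap.ker (f (m + k)),
      transMap α' m k x ∈ (⊥ : Submodule R (M' m)) := hker
  have tC : ∀ m, ∃ k, ∀ x ∈ LinearMap.ker (g (m + k)),
      transMap α m k x ∈ LinearMap.range (f m) := hmid
  have tD : ∀ m, ∃ k, ∀ x ∈ (⊤ : Submodule R (M'' (m + k))),
      transMap α'' m k x ∈ LinearMap.range (g m) := fun m =>
    (hcoker m).imp fun k hk x _ => hk x
  have sBot : ∀ n, ∀ x ∈ (⊥ : Submodule R (M' (n + 1))), α' n x ∈ (⊥ : Submodule R (M' n)) := by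
    intro n x hx
    rw [Submodule.mem_bot] at hx ⊢
    rw [hx, map_zero]
  refine snake_of_bijective_on_homology (proShift α') (proShift α) (proShift α'')
    (piMapL f) (piMapL g) (proShift_comm α' α f hf) (proShift_comm α α'' g hg)
    (fun x => funext fun n => hgf' n (x n)) ?_ ?_ ?_ ?_ ?_ ?_ _ _ _ _
  · intro x hx hx'
    exact funext (proShift_injective_mod α' (fun n => LinearMap.ker (f n)) (fun _ => ⊥) sBot tK x
      (congrFun hx) (congrFun hx'))
  · intro y hy
    obtain ⟨x, hx, hxy⟩ := proShift_surjective_mod α' (fun n => LinearMap.ker (f n)) (fun _ => ⊥)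
      sKf sBot tK y (congrFun hy)
    exact ⟨x, funext hx, (sub_eq_zero.1 (funext hxy)).symm⟩
  · rintro y hy ⟨a, ha⟩
    exact rangeF y (proShift_injective_mod α (fun n => LinearMap.ker (g n))
      (fun n => LinearMap.range (f n)) sRf tC y (congrFun hy) fun n => ⟨a n, congrFun ha n⟩)
  · intro y hy
    obtain ⟨x, hx, hxy⟩ := proShift_surjective_mod α (fun n => LinearMap.ker (g n))
      (fun n => LinearMap.range (f n)) sKg sRf tC y (congrFun hy)
    exact ⟨x, funext hx, rangeF _ hxy⟩
  · rintro z ⟨m, hm⟩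
    exact rangeG z (proShift_injective_mod α'' (fun _ => ⊤)
      (fun n => LinearMap.range (g n)) sRg tD z (fun _ => trivial) fun n => ⟨m n, congrFun hm n⟩)
  · intro z
    obtain ⟨w, -, hw⟩ := proShift_surjective_mod α'' (fun _ => ⊤)
      (fun n => LinearMap.range (g n)) (fun _ _ _ => trivial) sRg tD z (fun _ => trivial)
    exact ⟨w, rangeG _ hw⟩
end

section
/- Let {f_n} : {M_n, α_n} → {N_n, β_n} be a strict homomorphism of pro-R-modules which is a pro-isomorphism. Then the induced maps lim_n f_n : lim_n M_n → lim_n N_n and lim¹_n f_n : lim¹_n M_n → lim¹_n N_n are isomorphisms of R-modules. -/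
section ProTrivial

variable {R : Type*} [CommRing R]

/-- Strict homomorphisms commute with the composite transition maps. -/
theorem transMap_comm {M N : ℕ → Type*} [∀ n, AddCommGroup (M n)] [∀ n, Module R (M n)]
    [∀ n, AddCommGroup (N n)] [∀ n, Module R (N n)]
    {α : ∀ n, M (n + 1) →ₗ[R] M n} {β : ∀ n, N (n + 1) →ₗ[R] N n}
    {g : ∀ n, M n →ₗ[R] N n} (hg : ∀ n x, g n (α n x) = β n (g (n + 1) x)) (m k : ℕ)
    (x : M (m + k)) : g m (transMap α m k x) = transMap β m k (g (m + k) x) := by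
  induction k with
  | zero => rfl
  | succ k ih =>
    change g m (transMap α m k (α (m + k) x)) = transMap β m k (β (m + k) (g (m + k + 1) x))
    rw [ih, hg]

variable {T : ℕ → Type*} [∀ n, AddCommGroup (T n)] [∀ n, Module R (T n)]

/-- Peels the last transition map, into `T m`, off a composite, whereas `transMap` is defined by
peeling off the first. Quantifying over whole sequences `w` avoids a cast between
`T (m + (i + 1))` and `T (m + 1 + i)`. -/
theorem transMap_succ_apply_seq (γ : ∀ n, T (n + 1) →ₗ[R] T n) (m i : ℕ) (w : ∀ n, T n) :
    transMap γ m (i + 1) (w (m + (i + 1))) = γ m (transMap γ (m + 1) i (w (m + 1 + i))) := by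
  induction i generalizing w with
  | zero => rfl
  | succ i ih => exact ih (fun n => γ n (w (n + 1)))

theorem transMap_eq_zero_of_le {γ : ∀ n, T (n + 1) →ₗ[R] T n} {m k i : ℕ}
    (hk : ∀ x, transMap γ m k x = 0) (hi : k ≤ i) (x : T (m + i)) : transMap γ m i x = 0 := by
  induction i, hi using Nat.le_induction with
  | base => exact hk x
  | succ i _ ih => exact ih (γ (m + i) x)

/-- Both the inverse limit and the derived limit of a pro-trivial system vanish. -/
theorem proShift_bijective_of_proTrivial (γ : ∀ n, T (n + 1) →ₗ[R] T n)
    (h : ∀ m, ∃ k, ∀ x, transMap γ m k x = 0) : Function.Bijective (proShift γ) := by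
  choose k hk using h
  constructor
  · rw [injective_iff_map_eq_zero]
    intro x hx
    have hx' : ∀ n, x n = γ n (x (n + 1)) := fun n => sub_eq_zero.1 (congrFun hx n)
    have key : ∀ m i, x m = transMap γ m i (x (m + i)) := by
      intro m i
      induction i with
      | zero => rfl
      | succ i ih =>
        rw [ih, hx' (m + i)]
        rfl
    funext m
    rw [key m (k m), hk]
    rfl
  · intro y
    let S : ℕ → ∀ m, T m := fun K m => ∑ i ∈ Finset.range K, transMap γ m i (y (m + i))
    have hstab : ∀ m K, k m ≤ K → S K m = S (k m) m := by
      intro m K hK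
      refine (Finset.sum_subset (Finset.range_mono hK) fun i _ hi => ?_).symm
      exact transMap_eq_zero_of_le (hk m) (by simpa using hi) _
    have hrec : ∀ m K, S (K + 1) m = y m + γ m (S K (m + 1)) := by
      intro m K
      change ∑ i ∈ Finset.range (K + 1), _ = _ + γ m (∑ i ∈ Finset.range K, _)
      rw [Finset.sum_range_succ', map_sum, add_comm]
      simp only [transMap_succ_apply_seq]
      rfl
    refine ⟨fun m => S (k m) m, funext fun m => ?_⟩
    -- a common length beyond which the sums at `m` and at `m + 1` are both stable
    have h1 := hrec m (max (k m) (k (m + 1)))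
    rw [hstab m _ (by omega), hstab (m + 1) _ (by omega)] at h1
    change S (k m) m - γ m (S (k (m + 1)) (m + 1)) = y m
    rw [h1, add_sub_cancel_right]

end ProTrivial

/-- If a strict homomorphism `{fₙ} : {Mₙ, αₙ} → {Nₙ, βₙ}` of
pro-`R`-modules is a pro-isomorphism (i.e. the systems `{ker fₙ}` and `{coker fₙ}` are
pro-trivial), then the induced maps `lim fₙ : lim Mₙ → lim Nₙ` and
`lim¹ fₙ : lim¹ Mₙ → lim¹ Nₙ` are isomorphisms of `R`-modules. -/
theorem limMap_bijective_and_lim1Map_bijective_of_proIso {R : Type*} [CommRing R]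
    {M N : ℕ → Type*}
    [∀ n, AddCommGroup (M n)] [∀ n, Module R (M n)]
    [∀ n, AddCommGroup (N n)] [∀ n, Module R (N n)]
    (α : ∀ n, M (n + 1) →ₗ[R] M n) (β : ∀ n, N (n + 1) →ₗ[R] N n)
    (f : ∀ n, M n →ₗ[R] N n)
    (hf : ∀ n, (f n).comp (α n) = (β n).comp (f (n + 1)))
    -- `{ker fₙ}` is pro-trivial:
    (hker : ∀ m : ℕ, ∃ k : ℕ, ∀ x : M (m + k), f (m + k) x = 0 → transMap α m k x = 0)
    -- `{coker fₙ}` is pro-trivial: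
    (hcoker : ∀ m : ℕ, ∃ k : ℕ, ∀ y : N (m + k), ∃ x : M m, f m x = transMap β m k y) :
    Function.Bijective (limMap α β f hf) ∧ Function.Bijective (lim1Map α β f hf) := by
  have hf' : ∀ n x, f n (α n x) = β n (f (n + 1) x) := fun n x => LinearMap.congr_fun (hf n) x
  have comm := proShift_comm α β f hf
  -- The shift map is bijective on `∏ ker fₙ`.
  let κ : ∀ n, LinearMap.ker (f (n + 1)) →ₗ[R] LinearMap.ker (f n) := fun n =>
    (α n).restrict fun x hx => by
      rw [LinearMap.mem_ker] at hx ⊢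
      rw [hf', hx, map_zero]
  have hκ : Function.Bijective (proShift (M := fun n => ↥(LinearMap.ker (f n))) κ) := by
    refine proShift_bijective_of_proTrivial (T := fun n => ↥(LinearMap.ker (f n))) κ fun m => ?_
    obtain ⟨k, hk⟩ := hker m
    refine ⟨k, fun x => Subtype.ext ?_⟩
    exact (transMap_comm (M := fun n => ↥(LinearMap.ker (f n))) (α := κ) (β := α)
      (g := fun n => (LinearMap.ker (f n)).subtype) (fun _ _ => rfl) m k x).trans
      (hk _ x.2)
  have kerInj : ∀ x, piMapL f x = 0 → proShift α x = 0 → x = 0 := by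
    intro x hx hx0
    let x' : ∀ n, LinearMap.ker (f n) := fun n => ⟨x n, congrFun hx n⟩
    have h0 : x' = 0 := hκ.1 (by
      rw [map_zero]
      exact funext fun n => Subtype.ext (congrFun hx0 n))
    exact funext fun n => congrArg Subtype.val (congrFun h0 n)
  have kerSurj : ∀ x, piMapL f x = 0 → ∃ z, piMapL f z = 0 ∧ proShift α z = x := by
    intro x hx
    obtain ⟨z, hz⟩ := hκ.2 fun n => ⟨x n, congrFun hx n⟩
    exact ⟨fun n => z n, funext fun n => (z n).2,
      funext fun n => congrArg Subtype.val (congrFun hz n)⟩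
  -- The shift map is bijective on `∏ coker fₙ`.
  let χ : ∀ n, (N (n + 1) ⧸ LinearMap.range (f (n + 1))) →ₗ[R] (N n ⧸ LinearMap.range (f n)) :=
    fun n => Submodule.mapQ _ _ (β n) (by
      rintro _ ⟨x, rfl⟩
      exact ⟨α n x, hf' n x⟩)
  let q : ∀ n, N n →ₗ[R] (N n ⧸ LinearMap.range (f n)) := fun n => Submodule.mkQ _
  have hχ : Function.Bijective (proShift (M := fun n => N n ⧸ LinearMap.range (f n)) χ) := by
    refine proShift_bijective_of_proTrivial (T := fun n => N n ⧸ LinearMap.range (f n)) χ fun m => ?_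
    obtain ⟨k, hk⟩ := hcoker m
    refine ⟨k, fun x => ?_⟩
    obtain ⟨y, rfl⟩ := Submodule.mkQ_surjective _ x
    refine (transMap_comm (N := fun n => N n ⧸ LinearMap.range (f n)) (g := q)
      (β := χ) (α := β) (fun _ _ => rfl) m k y).symm.trans ?_
    exact (Submodule.Quotient.mk_eq_zero _).2 (hk y)
  have mem_range : ∀ y : ∀ n, N n, (∀ n, q n (y n) = 0) → ∃ x, piMapL f x = y := by
    intro y hy
    have hy' : ∀ n, ∃ x, f n x = y n := fun n => (Submodule.Quotient.mk_eq_zero _).1 (hy n)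
    choose x hx using hy'
    exact ⟨x, funext hx⟩
  have cokInj : ∀ y x, proShift β y = piMapL f x → ∃ z, piMapL f z = y := by
    intro y x hyx
    have h0 : (fun n => q n (y n)) = 0 := hχ.1 (by
      rw [map_zero]
      funext n
      have h1 : q n (proShift β y n) = 0 := by
        rw [hyx]
        exact (Submodule.Quotient.mk_eq_zero _).2 ⟨x n, rfl⟩
      exact h1)
    exact mem_range y fun n => congrFun h0 n
  have cokSurj : ∀ y, ∃ z x, piMapL f x = y - proShift β z := by
    intro y
    obtain ⟨c, hc⟩ := hχ.2 fun n => q n (y n)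
    choose z hz using fun n => Submodule.mkQ_surjective _ (c n)
    obtain rfl : (fun n => q n (z n)) = c := funext hz
    refine ⟨z, mem_range _ fun n => ?_⟩
    have h1 : q n (proShift β z n) = q n (y n) := congrFun hc n
    rw [Pi.sub_apply, map_sub, h1, sub_self]
  refine ⟨⟨?_, ?_⟩, ?_, ?_⟩
  · rw [injective_iff_map_eq_zero]
    intro x hx
    exact Subtype.ext (kerInj x.1 (congrArg Subtype.val hx) x.2)
  · rintro ⟨y, hy⟩
    obtain ⟨x, rfl⟩ := cokInj y 0 (by rw [map_zero]; exact hy)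
    obtain ⟨z, hz, hzx⟩ := kerSurj (proShift α x) (by rw [← comm]; exact hy)
    -- `x` lifts `y` but need not be compatible; subtracting `z` corrects it.
    refine ⟨⟨x - z, ?_⟩, Subtype.ext ?_⟩
    · rw [LinearMap.mem_ker, map_sub, hzx, sub_self]
    · change piMapL f (x - z) = piMapL f x
      rw [map_sub, hz, sub_zero]
  · rw [injective_iff_map_eq_zero]
    intro c hc
    obtain ⟨x, rfl⟩ := Submodule.mkQ_surjective (LinearMap.range (proShift α)) c
    obtain ⟨y, hy⟩ : ∃ y, proShift β y = piMapL f x := (Submodule.Quotient.mk_eq_zero _).1 hc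
    obtain ⟨w, rfl⟩ := cokInj y x hy
    obtain ⟨z, -, hz⟩ := kerSurj (x - proShift α w) (by rw [map_sub, ← comm, hy, sub_self])
    refine (Submodule.Quotient.mk_eq_zero _).2 ⟨z + w, ?_⟩
    rw [map_add, hz, sub_add_cancel]
  · intro c
    obtain ⟨y, rfl⟩ := Submodule.mkQ_surjective (LinearMap.range (proShift β)) c
    obtain ⟨z, x, hx⟩ := cokSurj y
    refine ⟨Submodule.mkQ (LinearMap.range (proShift α)) x, ?_⟩
    refine (Submodule.Quotient.eq _).2 ⟨-z, ?_⟩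
    rw [map_neg, hx, sub_sub_cancel_left]
end

section
/- Let R be a commutative Noetherian ring, I ⊆ R an ideal, and M' → M → M'' an exact sequence of finitely generated R-modules. Then the induced sequence of pro-R-modules {M'/IⁿM'} → {M/IⁿM} → {M''/IⁿM''} (with transition maps the canonical projections) is pro-exact: the composite of the two induced maps is zero in each degree, and the inverse system {ker(M/IⁿM → M''/IⁿM'') / im(M'/IⁿM' → M/IⁿM)} is pro-trivial. -/
/-- Let `R` be a commutative Noetherian ring, `I ⊆ R` an ideal, and
`M' → M → M''` an exact sequence of finitely generated `R`-modules.  Then the induced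
sequence of pro-`R`-modules `{M'/IⁿM'} → {M/IⁿM} → {M''/IⁿM''}` (with the canonical
projections as transition maps) is pro-exact: the composite of the two induced maps is zero
in each degree, and the inverse system `{ker/im}` of subquotients is pro-trivial, i.e. for
every `m` there is a `k` such that every element of the kernel at level `m + k` is mapped,
under the transition map to level `m`, into the image at level `m`. -/
theorem proExact_of_exact_fg {R : Type*} [CommRing R] [IsNoetherianRing R] (I : Ideal R)
    {M' M M'' : Type*}
    [AddCommGroup M'] [Module R M'] [AddCommGroup M] [Module R M]
    [AddCommGroup M''] [Module R M'']
    [Module.Finite R M'] [Module.Finite R M] [Module.Finite R M'']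
    (f : M' →ₗ[R] M) (g : M →ₗ[R] M'') (hexact : Function.Exact f g) :
    (∀ (n : ℕ) (x' : M'), g (f x') ∈ (I ^ n • ⊤ : Submodule R M'')) ∧
    (∀ m : ℕ, ∃ k : ℕ, ∀ x : M, g x ∈ (I ^ (m + k) • ⊤ : Submodule R M'') →
      ∃ x' : M', x - f x' ∈ (I ^ m • ⊤ : Submodule R M)) := by
  refine ⟨fun n x' => by simp [hexact.apply_apply_eq_zero], fun m => ?_⟩
  -- `k` is the Artin-Rees constant of `g(M) ⊆ M''`, so `I^(m+k) M'' ∩ g(M) ⊆ I^m g(M) = g(I^m M)`.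
  obtain ⟨k, hk⟩ := I.exists_pow_inf_eq_pow_smul (LinearMap.range g)
  refine ⟨k, fun x hx => ?_⟩
  have hgx : g x ∈ (I ^ m • ⊤ : Submodule R M).map g := by
    rw [Submodule.map_smul'', Submodule.map_top]
    have h : g x ∈ I ^ (m + k) • ⊤ ⊓ LinearMap.range g := ⟨hx, x, rfl⟩
    rw [hk _ (Nat.le_add_left k m), Nat.add_sub_cancel] at h
    exact Submodule.smul_mono le_rfl inf_le_right h
  obtain ⟨y, hy, hyx⟩ := hgx
  -- `x - y ∈ ker g = im f` with `y ∈ I^m M`.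
  obtain ⟨x', hx'⟩ := (hexact (x - y)).1 (by rw [map_sub, hyx, sub_self])
  exact ⟨x', by rwa [hx', sub_sub_cancel]⟩
end

section
/- Let C be a nontrivial finite cyclic group, Gen(C) ⊆ C its set of generators, and θ_C ∈ Map(C, ℂ) the indicator function of Gen(C) (θ_C(g) = 1 if g generates C, θ_C(g) = 0 otherwise). Then the ℚ-subspace θ_C · (R(C) ⊗_ℤ ℚ) of Map(C, ℂ) (pointwise products of θ_C with ℚ-linear combinations of virtual characters), equipped with the Aut(C)-action by precomposition, is isomorphic as a ℚ[Aut(C)]-module to the regular representation ℚ[Aut(C)]; equivalently, it is isomorphic to the permutation module ℚ[Gen(C)], on which Aut(C) acts freely and transitively. -/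
/-!
Let `n = |C|`, let `K = ℚ(ζ_n)`, embedded in `ℂ` by `ι`, and fix a generator `g` of `C`. A faithful
character `χ : C → K` identifies `Aut(C)` with `Gal(K/ℚ)`, through an isomorphism `ψ` with
`ψ σ (χ c) = χ (σ c)` (`exists_autEquivGal`).

A function in `θ_C · (R(C) ⊗ ℚ)` is Galois-equivariant on generators, hence determined by its value
at `g`, which can be any element of `K`. This is made precise by `galFun`, which sends `x ∈ K` to
the function `σ(g) ↦ ι (ψ σ x)` supported on the generators. It is injective, its image is
`θ_C · (R(C) ⊗ ℚ)` (`range_galFun`), and since `Gal(K/ℚ)` is abelian it carries the action of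
`ψ σ⁻¹` on `K` to precomposition with `σ⁻¹` (`galFun_comp_inv`).

By the normal basis theorem `K` is the regular representation of `Gal(K/ℚ)`, and the twist by
inversion is absorbed by reindexing the basis (`exists_basis`). The permutation module follows
because `Aut(C)` acts simply transitively on `Gen(C)` (`autEquivGen`).
-/

set_option synthInstance.maxHeartbeats 1000000
set_option maxHeartbeats 1000000

open scoped Classical in
/-- The indicator function `θ_C ∈ Map(C, ℂ)` of the set `Gen(C)` of generators of a finite
cyclic group `C`. -/
noncomputable def genIndicator (C : Type) [Group C] : C → ℂ :=
  fun g => if Subgroup.zpowers g = ⊤ then 1 else 0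

/-- `R(C) ⊗_ℤ ℚ`, identified with the `ℚ`-span of the characters of finite-dimensional
complex representations inside `Map(C, ℂ)`. -/
noncomputable def repSpanQ (C : Type) [Group C] : Submodule ℚ (C → ℂ) :=
  Submodule.span ℚ {f : C → ℂ | ∃ V : FDRep ℂ C, f = V.character}

/-- The `ℚ`-subspace `θ_C · (R(C) ⊗_ℤ ℚ)` of `Map(C, ℂ)`: pointwise products of `θ_C`
with `ℚ`-linear combinations of virtual characters. -/
noncomputable def thetaSubspace (C : Type) [Group C] : Submodule ℚ (C → ℂ) :=
  (repSpanQ C).map (LinearMap.mulLeft ℚ (genIndicator C))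

/-- The set of generators of `C`. -/
def GenOf (C : Type) [Group C] : Type := {g : C // Subgroup.zpowers g = ⊤}

/-- An automorphism of `C` permutes the generators of `C`. -/
def genMap {C : Type} [Group C] (σ : C ≃* C) : GenOf C → GenOf C :=
  fun g => ⟨σ g.1, by
    have h := MonoidHom.map_zpowers σ.toMonoidHom g.1
    simp only [MulEquiv.coe_toMonoidHom] at h
    rw [← h, g.2]
    exact Subgroup.map_top_of_surjective _ σ.surjective⟩

open Module

/-- An endomorphism of finite order is diagonalisable, so the traces of its powers are the power
sums of its eigenvalues, which are roots of unity. -/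
lemma exists_trace_pow_eq_sum {V : Type*} [AddCommGroup V] [Module ℂ V] [FiniteDimensional ℂ V]
    (T : End ℂ V) {n : ℕ} (hn : n ≠ 0) (hT : T ^ n = 1) :
    ∃ (I : Type) (_ : Fintype I) (μ : I → ℂ), (∀ i, μ i ^ n = 1) ∧
      ∀ k : ℕ, LinearMap.trace ℂ V (T ^ k) = ∑ i, μ i ^ k := by
  classical
  have hss : T.IsSemisimple := by
    have hsep : (Polynomial.X ^ n - 1 : Polynomial ℂ).Separable :=
      Polynomial.separable_X_pow_sub_C 1 (by exact_mod_cast hn) one_ne_zero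
    refine Module.End.isSemisimple_of_squarefree_aeval_eq_zero hsep.squarefree ?_
    simp [hT]
  let eigenDecomp := DirectSum.isInternal_submodule_of_iSupIndep_of_iSup_eq_top
    T.eigenspaces_iSupIndep hss.iSup_eigenspace_eq_top
  let I := (ν : ℂ) × Fin (finrank ℂ (T.eigenspace ν))
  let v : Basis I ℂ V := eigenDecomp.collectedBasis fun μ ↦ finBasis ℂ (T.eigenspace μ)
  have : Fintype I := FiniteDimensional.fintypeBasisIndex v
  have hv (i : I) : T (v i) = i.1 • v i :=
    Module.End.mem_eigenspace_iff.mp (eigenDecomp.collectedBasis_mem _ i)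
  have hvk (k : ℕ) (i : I) : (T ^ k) (v i) = i.1 ^ k • v i := by
    induction k with
    | zero => simp
    | succ k ih => rw [pow_succ', Module.End.mul_apply, ih, map_smul, hv, smul_smul, pow_succ]
  refine ⟨I, this, Sigma.fst, fun i ↦ ?_, fun k ↦ ?_⟩
  · have h := hvk n i
    rw [hT, Module.End.one_apply] at h
    have h' : (i.1 ^ n - 1) • v i = 0 := by rw [sub_smul, ← h, one_smul, sub_self]
    exact sub_eq_zero.mp ((smul_eq_zero.mp h').resolve_right (v.ne_zero i))
  · rw [LinearMap.trace_eq_matrix_trace ℂ v, Matrix.trace]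
    refine Finset.sum_congr rfl fun i _ ↦ ?_
    simp [LinearMap.toMatrix_apply, hvk]

lemma monoidHom_mem_repSpanQ {C : Type} [Group C] (χ : C →* ℂ) : (χ : C → ℂ) ∈ repSpanQ C := by
  refine Submodule.subset_span
    ⟨FDRep.of ((Algebra.lsmul ℂ ℂ ℂ : ℂ →ₐ[ℂ] End ℂ ℂ).toMonoidHom.comp χ), ?_⟩
  funext c
  symm
  change LinearMap.trace ℂ ℂ (Algebra.lsmul ℂ ℂ ℂ (χ c)) = χ c
  rw [LinearMap.trace_eq_matrix_trace ℂ (Basis.singleton Unit ℂ)]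
  simp [Matrix.trace]

section

variable {C : Type} [Group C]

lemma GenOf.mem {g : C} (hg : Subgroup.zpowers g = ⊤) (x : C) : x ∈ Subgroup.zpowers g := by
  simp [hg]

/-- Evaluation at a fixed generator `g` identifies `Aut(C)` with `Gen(C)`: the action of
`Aut(C)` on `Gen(C)` is free and transitive. -/
noncomputable def autEquivGen (g : GenOf C) : (C ≃* C) ≃ GenOf C :=
  Equiv.ofBijective (fun σ ↦ genMap σ g) <| by
    constructor
    · intro σ τ h
      exact (MulEquiv.eq_iff_eq_on_generator (GenOf.mem g.2) σ τ).mpr (congrArg Subtype.val h)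
    · intro c
      have ho : orderOf g.1 = orderOf c.1 := by
        rw [← Nat.card_zpowers, ← Nat.card_zpowers, g.2, c.2]
      exact ⟨mulEquivOfOrderOfEq (GenOf.mem g.2) (GenOf.mem c.2) ho,
        Subtype.ext (mulEquivOfOrderOfEq_apply_gen (GenOf.mem g.2) (GenOf.mem c.2) ho)⟩

lemma autEquivGen_apply (g : GenOf C) (σ : C ≃* C) : autEquivGen g σ = genMap σ g := rfl

lemma genMap_mul (σ τ : C ≃* C) (g : GenOf C) : genMap (σ * τ) g = genMap σ (genMap τ g) := rfl

lemma autEquivGen_symm_genMap (g : GenOf C) (σ : C ≃* C) (c : GenOf C) :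
    (autEquivGen g).symm (genMap σ c) = σ * (autEquivGen g).symm c := by
  rw [Equiv.symm_apply_eq, autEquivGen_apply, genMap_mul, ← autEquivGen_apply g (Equiv.symm _ c),
    Equiv.apply_symm_apply]

variable [Fintype C]

/-- A generator `g` and a primitive root of unity `ζ` of order `|C|` determine a faithful linear
character of `C` with `g ↦ ζ`. -/
lemma exists_character {K : Type*} [Field K] {ζ : K} (hζ : IsPrimitiveRoot ζ (Fintype.card C))
    (g : GenOf C) : ∃ χ : C →* K, χ g.1 = ζ ∧ Function.Injective χ := by
  have ho : orderOf g.1 = Fintype.card C := by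
    rw [← Nat.card_zpowers, g.2, Nat.card_eq_fintype_card.symm]; simp
  have hu := hζ.isUnit (Fintype.card_ne_zero)
  have hζ' : IsPrimitiveRoot hu.unit (Fintype.card C) := hζ.isUnit_unit Fintype.card_ne_zero
  have hd : orderOf hu.unit ∣ orderOf g.1 := by rw [← hζ'.eq_orderOf, ho]
  let χ := monoidHomOfForallMemZpowers (GenOf.mem g.2) hd
  have hχ : χ g.1 = hu.unit := monoidHomOfForallMemZpowers_apply_gen (GenOf.mem g.2) hd
  refine ⟨(Units.coeHom K).comp χ, by simp [hχ], ?_⟩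
  refine Units.val_injective.comp ((injective_iff_map_eq_one χ).mpr fun c hc ↦ ?_)
  obtain ⟨k, rfl⟩ := Subgroup.mem_zpowers_iff.mp (GenOf.mem g.2 c)
  rw [map_zpow, hχ, hζ'.zpow_eq_one_iff_dvd, ← ho] at hc
  exact orderOf_dvd_iff_zpow_eq_one.mp hc

lemma exists_pow_eq (g : GenOf C) (c : C) : ∃ k : ℕ, g.1 ^ k = c := by
  have := mem_powers_iff_mem_zpowers.mpr (GenOf.mem g.2 c)
  exact this

/-- A faithful character `χ : C → K` with values in the cyclotomic field identifies `Aut(C)` with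
`Gal(K/ℚ)`: the Galois conjugates of a primitive root of unity `χ g` are the values of `χ` at the
generators of `C`. -/
lemma exists_autEquivGal {K : Type*} [Field K] [Algebra ℚ K]
    [IsCyclotomicExtension {Fintype.card C} ℚ K] (g : GenOf C) (χ : C →* K)
    (hg : IsPrimitiveRoot (χ g.1) (Fintype.card C)) (hχ : Function.Injective χ) :
    ∃ ψ : (C ≃* C) ≃* Gal(K/ℚ), ∀ σ c, ψ σ (χ c) = χ (σ c) := by
  have hN : NeZero (Fintype.card C) := ⟨Fintype.card_ne_zero⟩
  have hirr := Polynomial.cyclotomic.irreducible_rat (Fintype.card_pos (α := C))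
  have ext_gal {s t : Gal(K/ℚ)} (h : s (χ g.1) = t (χ g.1)) : s = t :=
    AlgEquiv.coe_toAlgHom_injective ((hg.powerBasis ℚ).algHom_ext (by simpa using h))
  have hprim (c : GenOf C) : IsPrimitiveRoot (χ c.1) (Fintype.card C) := by
    have h1 : orderOf c.1 = Fintype.card C := by
      rw [← Nat.card_zpowers, c.2, Nat.card_eq_fintype_card.symm]; simp
    rw [← h1, ← orderOf_injective χ hχ]
    exact IsPrimitiveRoot.orderOf _
  have hex (σ : C ≃* C) : ∃ s : Gal(K/ℚ), s (χ g.1) = χ (σ g.1) := by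
    have hmin : minpoly ℚ (χ g.1) = minpoly ℚ (χ (genMap σ g).1) := by
      rw [← hg.minpoly_eq_cyclotomic_of_irreducible hirr,
        ← (hprim (genMap σ g)).minpoly_eq_cyclotomic_of_irreducible hirr]
    have h := (hg.powerBasis ℚ).equivOfMinpoly_gen ((hprim (genMap σ g)).powerBasis ℚ)
    simp only [IsPrimitiveRoot.powerBasis_gen] at h
    exact ⟨_, h hmin⟩
  choose ψ hψ using hex
  have hψ' (σ : C ≃* C) (c : C) : ψ σ (χ c) = χ (σ c) := by
    obtain ⟨k, rfl⟩ := exists_pow_eq g c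
    simp [hψ]
  let Ψ : (C ≃* C) →* Gal(K/ℚ) := MonoidHom.mk' ψ fun σ τ ↦ ext_gal <| by
    rw [hψ', AlgEquiv.mul_apply, hψ', hψ', MulAut.mul_apply]
  refine ⟨MulEquiv.ofBijective Ψ ⟨fun σ τ h ↦ ?_, fun s ↦ ?_⟩, hψ'⟩
  · refine (MulEquiv.eq_iff_eq_on_generator (GenOf.mem g.2) σ τ).mpr (hχ ?_)
    rw [← hψ, ← hψ]
    exact DFunLike.congr_fun h _
  · have hs : IsPrimitiveRoot (s (χ g.1)) (Fintype.card C) := hg.map_of_injective s.injective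
    obtain ⟨j, -, hj⟩ := hg.eq_pow_of_pow_eq_one hs.pow_eq_one
    have hgen : Subgroup.zpowers (g.1 ^ j) = ⊤ := by
      rw [← Subgroup.card_eq_iff_eq_top, Nat.card_zpowers, ← orderOf_injective χ hχ, map_pow, hj,
        ← hs.eq_orderOf, Nat.card_eq_fintype_card]
    refine ⟨(autEquivGen g).symm ⟨g.1 ^ j, hgen⟩, ext_gal ?_⟩
    have h2 := congrArg Subtype.val ((autEquivGen g).apply_symm_apply ⟨g.1 ^ j, hgen⟩)
    change ((autEquivGen g).symm ⟨g.1 ^ j, hgen⟩) g.1 = g.1 ^ j at h2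
    change ψ _ _ = _
    rw [hψ, h2, map_pow, hj]

end

open scoped Classical in
/-- The function on `C` attached to `x ∈ K`: it vanishes off the generators, and at a generator
`σ(g)`, with `σ ∈ Aut(C)`, it takes the value `ι (ψ σ x)`. -/
noncomputable def galFun {C : Type} [Group C] {K : Type*} [Field K] [Algebra ℚ K] (g : GenOf C) (ι : K →ₐ[ℚ] ℂ)
    (ψ : (C ≃* C) ≃* Gal(K/ℚ)) : K →ₗ[ℚ] (C → ℂ) where
  toFun x c := if h : Subgroup.zpowers c = ⊤ then ι (ψ ((autEquivGen g).symm ⟨c, h⟩) x) else 0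
  map_add' x y := by
    funext c
    by_cases h : Subgroup.zpowers c = ⊤ <;> simp [h]
  map_smul' q x := by
    funext c
    by_cases h : Subgroup.zpowers c = ⊤ <;> simp [h]

section

variable {C : Type} [Group C] {K : Type*} [Field K] [Algebra ℚ K] (g : GenOf C)
  (ι : K →ₐ[ℚ] ℂ) (ψ : (C ≃* C) ≃* Gal(K/ℚ))

lemma galFun_gen (x : K) (c : GenOf C) :
    galFun g ι ψ x c.1 = ι (ψ ((autEquivGen g).symm c) x) :=
  dif_pos c.2

lemma galFun_of_not (x : K) {c : C} (h : ¬ Subgroup.zpowers c = ⊤) : galFun g ι ψ x c = 0 :=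
  dif_neg h

lemma galFun_injective : Function.Injective (galFun g ι ψ) := by
  intro x y h
  have h1 := congrFun h g.1
  rw [galFun_gen, galFun_gen] at h1
  exact (ψ _).injective (ι.injective h1)

/-- Commutativity of the Galois group turns precomposition with `σ⁻¹` into `ψ σ⁻¹`. -/
lemma galFun_comp_inv [Fintype C] [IsCyclotomicExtension {Fintype.card C} ℚ K] (x : K) (σ : C ≃* C) (c : C) :
    galFun g ι ψ x (σ⁻¹ c) = galFun g ι ψ (ψ σ⁻¹ x) c := by
  by_cases h : Subgroup.zpowers c = ⊤
  · have hcomm (s t : Gal(K/ℚ)) : s * t = t * s :=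
      (IsCyclotomicExtension.isMulCommutative {Fintype.card C} ℚ K).is_comm.comm s t
    obtain ⟨d, rfl⟩ : ∃ d : GenOf C, d.1 = c := ⟨⟨c, h⟩, rfl⟩
    have h1 : galFun g ι ψ x (σ⁻¹ d.1) = ι (ψ ((autEquivGen g).symm (genMap σ⁻¹ d)) x) :=
      galFun_gen g ι ψ x (genMap σ⁻¹ d)
    rw [h1, galFun_gen, autEquivGen_symm_genMap, map_mul, hcomm, AlgEquiv.mul_apply]
  · rw [galFun_of_not _ _ _ _ h, galFun_of_not]
    intro h'
    apply h
    have := (genMap σ ⟨σ⁻¹ c, h'⟩).2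
    simpa [genMap] using this

/-- On the values of the faithful character `χ`, `galFun` gives the linear characters
`ι ∘ χ ^ j`, cut off to the generators. -/
lemma galFun_pow (χ : C →* K) (hψ : ∀ σ c, ψ σ (χ c) = χ (σ c)) (j : ℕ) :
    galFun g ι ψ (χ g.1 ^ j) = genIndicator C * fun c ↦ ι (χ c) ^ j := by
  funext c
  by_cases h : Subgroup.zpowers c = ⊤
  · obtain ⟨d, rfl⟩ : ∃ d : GenOf C, d.1 = c := ⟨⟨c, h⟩, rfl⟩
    have h2 : (autEquivGen g).symm d g.1 = d.1 :=
      congrArg Subtype.val ((autEquivGen g).apply_symm_apply d)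
    rw [galFun_gen, map_pow (ψ _), hψ, h2]
    simp [genIndicator, h]
  · simp [galFun_of_not _ _ _ _ h, genIndicator, h]

/-- The image of `galFun` is `θ_C · (R(C) ⊗ ℚ)`: the powers of `χ g` span `K` over `ℚ`, and every
character of `C` is a sum of powers of the linear character `ι ∘ χ`. -/
lemma range_galFun [Fintype C] [IsCyclotomicExtension {Fintype.card C} ℚ K] (χ : C →* K)
    (hg : IsPrimitiveRoot (χ g.1) (Fintype.card C)) (hψ : ∀ σ c, ψ σ (χ c) = χ (σ c)) :
    LinearMap.range (galFun g ι ψ) = thetaSubspace C := by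
  have hN : NeZero (Fintype.card C) := ⟨Fintype.card_ne_zero⟩
  apply le_antisymm
  · rw [LinearMap.range_eq_map, ← (hg.powerBasis ℚ).basis.span_eq, Submodule.map_span,
      Submodule.span_le]
    rintro _ ⟨_, ⟨j, rfl⟩, rfl⟩
    rw [PowerBasis.basis_eq_pow, IsPrimitiveRoot.powerBasis_gen, galFun_pow g ι ψ χ hψ]
    exact ⟨_, monoidHom_mem_repSpanQ (((powMonoidHom (j : ℕ)).comp (ι : K →* ℂ)).comp χ), rfl⟩
  · rw [thetaSubspace, repSpanQ, Submodule.map_span, Submodule.span_le]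
    rintro _ ⟨_, ⟨V, rfl⟩, rfl⟩
    have hT : (V.ρ g.1 : End ℂ V) ^ Fintype.card C = 1 := by
      rw [← map_pow, pow_card_eq_one, map_one]
    obtain ⟨I, _, μ, hμ, htr⟩ := exists_trace_pow_eq_sum (V.ρ g.1) Fintype.card_ne_zero hT
    have hg' : IsPrimitiveRoot (ι (χ g.1)) (Fintype.card C) := hg.map_of_injective ι.injective
    have hpow (i : I) : ∃ j : ℕ, ι (χ g.1) ^ j = μ i := by
      obtain ⟨j, -, hj⟩ := hg'.eq_pow_of_pow_eq_one (hμ i)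
      exact ⟨j, hj⟩
    choose j hj using hpow
    refine ⟨∑ i, χ g.1 ^ j i, ?_⟩
    rw [map_sum, LinearMap.mulLeft_apply]
    simp_rw [galFun_pow g ι ψ χ hψ]
    rw [← Finset.mul_sum]
    congr 1
    funext c
    obtain ⟨k, rfl⟩ := exists_pow_eq g c
    rw [FDRep.character, map_pow, htr, Finset.sum_apply]
    refine Finset.sum_congr rfl fun i _ ↦ ?_
    rw [map_pow, map_pow, ← hj, ← pow_mul, ← pow_mul, mul_comm]

end

/-- The inverse in `ψ τ⁻¹` matches the action `f ↦ f ∘ σ⁻¹` on functions. The witness is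
`B σ = ψ σ⁻¹ b`, where the Galois conjugates of `b` form a normal basis of `K` over `ℚ`. -/
lemma exists_basis {C : Type} [Group C] {K : Type*} [Field K] [Algebra ℚ K] [FiniteDimensional ℚ K] [IsGalois ℚ K]
    (ψ : (C ≃* C) ≃* Gal(K/ℚ)) :
    ∃ B : Basis (C ≃* C) ℚ K, ∀ σ τ, B (σ * τ) = ψ τ⁻¹ (B σ) := by
  refine ⟨(IsGalois.normalBasis ℚ K).reindex ((Equiv.inv (C ≃* C)).trans ψ.toEquiv).symm, ?_⟩
  intro σ τ
  simp only [Basis.reindex_apply, Equiv.symm_symm, Equiv.trans_apply, Equiv.inv_apply]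
  rw [IsGalois.normalBasis_apply, IsGalois.normalBasis_apply (ψ.toEquiv σ⁻¹)]
  simp

/-- The isomorphism with the regular representation, for any model `K` of the cyclotomic field. -/
lemma exists_regular_iso (C : Type) [Group C] [Fintype C] [IsCyclic C] (K : Type) [Field K]
    [Algebra ℚ K] [IsCyclotomicExtension {Fintype.card C} ℚ K] :
    ∃ e : thetaSubspace C ≃ₗ[ℚ] MonoidAlgebra ℚ (C ≃* C),
      ∀ (σ : C ≃* C) (w : thetaSubspace C),
        ((e.symm (MonoidAlgebra.single σ (1 : ℚ) * e w) : thetaSubspace C) : C → ℂ) =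
          fun c => (w : C → ℂ) (σ⁻¹ c) := by
  have hN : NeZero (Fintype.card C) := ⟨Fintype.card_ne_zero⟩
  obtain ⟨g₀, hg₀⟩ := IsCyclic.exists_generator (α := C)
  let g : GenOf C := ⟨g₀, (Subgroup.eq_top_iff' _).mpr hg₀⟩
  have : FiniteDimensional ℚ K := IsCyclotomicExtension.finiteDimensional {Fintype.card C} ℚ K
  have : IsGalois ℚ K := IsCyclotomicExtension.isGalois {Fintype.card C} ℚ K
  have hζ := IsCyclotomicExtension.zeta_spec (Fintype.card C) ℚ K
  obtain ⟨χ, hχg, hχ⟩ := exists_character hζ g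
  rw [← hχg] at hζ
  obtain ⟨ψ, hψ⟩ := exists_autEquivGal g χ hζ hχ
  let ι : K →ₐ[ℚ] ℂ := IsAlgClosed.lift
  obtain ⟨B, hB⟩ := exists_basis ψ
  have hcomm (σ τ : C ≃* C) : σ * τ = τ * σ := ψ.injective <| by
    rw [map_mul, map_mul]
    exact (IsCyclotomicExtension.isMulCommutative {Fintype.card C} ℚ K).is_comm.comm _ _
  let Φ : K ≃ₗ[ℚ] thetaSubspace C :=
    (LinearEquiv.ofInjective _ (galFun_injective g ι ψ)).trans
      (LinearEquiv.ofEq _ _ (range_galFun g ι ψ χ hζ hψ))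
  let M : MonoidAlgebra ℚ (C ≃* C) ≃ₗ[ℚ] K :=
    (MonoidAlgebra.coeffLinearEquiv ℚ).trans B.repr.symm
  have hM (σ : C ≃* C) : M (MonoidAlgebra.single σ 1) = B σ := by
    simp [M]
  have hMσ (σ : C ≃* C) (y : MonoidAlgebra ℚ (C ≃* C)) :
      M (MonoidAlgebra.single σ 1 * y) = ψ σ⁻¹ (M y) := by
    have : M.toLinearMap ∘ₗ LinearMap.mulLeft ℚ (MonoidAlgebra.single σ 1) =
        (ψ σ⁻¹).toLinearMap ∘ₗ M.toLinearMap := by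
      ext τ
      simp [hM, hcomm σ τ, hB]
    exact LinearMap.congr_fun this y
  refine ⟨(M.trans Φ).symm, fun σ w ↦ ?_⟩
  obtain ⟨y, rfl⟩ := (M.trans Φ).surjective w
  funext c
  rw [LinearEquiv.symm_symm, LinearEquiv.symm_apply_apply, LinearEquiv.trans_apply, hMσ]
  exact (galFun_comp_inv g ι ψ (M y) σ c).symm

/-- **Statement 11.** Let `C` be a nontrivial finite cyclic group, `Gen(C)` its set of
generators, and `θ_C` the indicator function of `Gen(C)`.  Then the `ℚ`-subspace
`θ_C · (R(C) ⊗_ℤ ℚ)` of `Map(C, ℂ)`, with the `Aut(C)`-action by precomposition, is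
isomorphic as a `ℚ[Aut(C)]`-module to the regular representation `ℚ[Aut(C)]`;
equivalently, to the permutation module `ℚ[Gen(C)]`.  (The `Aut(C)`-action on functions is
`σ • f = f ∘ σ⁻¹`, on `ℚ[Aut(C)]` it is left multiplication, and on `ℚ[Gen(C)]` it is
induced by the permutation action `g ↦ σ(g)` of `Aut(C)` on `Gen(C)`.) -/
theorem thetaSubspace_iso_regular_and_permutation (C : Type) [Group C] [Fintype C]
    [IsCyclic C] [Nontrivial C] :
    (∃ e : thetaSubspace C ≃ₗ[ℚ] MonoidAlgebra ℚ (C ≃* C),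
      ∀ (σ : C ≃* C) (w : thetaSubspace C),
        ((e.symm (MonoidAlgebra.single σ (1 : ℚ) * e w) : thetaSubspace C) : C → ℂ) =
          fun c => (w : C → ℂ) (σ⁻¹ c)) ∧
    (∃ e : thetaSubspace C ≃ₗ[ℚ] (GenOf C →₀ ℚ),
      ∀ (σ : C ≃* C) (w : thetaSubspace C),
        ((e.symm (Finsupp.mapDomain (genMap σ) (e w)) : thetaSubspace C) : C → ℂ) =
          fun c => (w : C → ℂ) (σ⁻¹ c)) := by
  have hN : NeZero (Fintype.card C) := ⟨Fintype.card_ne_zero⟩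
  -- The instance is named to fix which `ℚ`-algebra structure on `CyclotomicField` is used.
  obtain ⟨e, he⟩ := @exists_regular_iso C _ _ _ (CyclotomicField (Fintype.card C) ℚ) _ _
    (CyclotomicField.isCyclotomicExtension (Fintype.card C) ℚ)
  refine ⟨⟨e, he⟩, ?_⟩
  obtain ⟨g₀, hg₀⟩ := IsCyclic.exists_generator (α := C)
  let g : GenOf C := ⟨g₀, (Subgroup.eq_top_iff' _).mpr hg₀⟩
  let P : MonoidAlgebra ℚ (C ≃* C) ≃ₗ[ℚ] (GenOf C →₀ ℚ) :=
    (MonoidAlgebra.coeffLinearEquiv ℚ).trans (Finsupp.domLCongr (autEquivGen g))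
  have hP (σ : C ≃* C) (y : MonoidAlgebra ℚ (C ≃* C)) :
      P (MonoidAlgebra.single σ 1 * y) = Finsupp.mapDomain (genMap σ) (P y) := by
    have : P.toLinearMap ∘ₗ LinearMap.mulLeft ℚ (MonoidAlgebra.single σ 1) =
        Finsupp.lmapDomain ℚ ℚ (genMap σ) ∘ₗ P.toLinearMap := by
      ext τ : 2
      simp [P, autEquivGen_apply, genMap_mul]
    exact LinearMap.congr_fun this y
  refine ⟨e.trans P, fun σ w ↦ ?_⟩
  rw [← he σ w, LinearEquiv.trans_apply, ← hP, LinearEquiv.symm_trans_apply,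
    LinearEquiv.symm_apply_apply]
end

section
/- Let C be a nontrivial finite cyclic group and let θ_C ∈ Map(C, ℂ) be the indicator function of the set Gen(C) of generators of C. Then θ_C lies in R(C) ⊗_ℤ ℚ, i.e., θ_C is a ℚ-linear combination of characters of finite-dimensional complex representations of C; moreover θ_C is an idempotent for the pointwise multiplication. -/
open CategoryTheory.MonoidalCategory in
/-- The characters of finite-dimensional complex representations, as a submonoid of `C → ℂ`;
the product of two characters is the character of the tensor product. -/
def charSubmonoid (C : Type) [Group C] : Submonoid (C → ℂ) where
  carrier := {f : C → ℂ | ∃ V : FDRep ℂ C, f = V.character}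
  one_mem' := by
    refine ⟨FDRep.of (Representation.trivial ℂ C ℂ), ?_⟩
    funext g
    simp [FDRep.character, FDRep.of_ρ']
  mul_mem' := by
    rintro _ _ ⟨V, rfl⟩ ⟨W, rfl⟩
    exact ⟨V ⊗ W, (FDRep.char_tensor V W).symm⟩

/-- The `ℚ`-algebra `R(C) ⊗ ℚ` inside `C → ℂ`. -/
noncomputable def charAlgebra (C : Type) [Group C] : Subalgebra ℚ (C → ℂ) :=
  Algebra.adjoin ℚ (charSubmonoid C : Set (C → ℂ))

lemma mem_charAlgebra_iff (C : Type) [Group C] (f : C → ℂ) :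
    f ∈ charAlgebra C ↔
      f ∈ Submodule.span ℚ {f : C → ℂ | ∃ V : FDRep ℂ C, f = V.character} := by
  rw [charAlgebra, ← Subalgebra.mem_toSubmodule, Algebra.adjoin_eq_span, Submonoid.closure_eq]
  rfl

open scoped Classical in
/-- The character of a permutation representation counts fixed points. -/
lemma character_ofMulAction (C X : Type) [Group C] [MulAction C X] [Fintype X] (g : C) :
    LinearMap.trace ℂ (MonoidAlgebra ℂ X) (Representation.ofMulAction ℂ C X g) =
      ∑ x : X, if g • x = x then (1 : ℂ) else 0 := by
  let b : Module.Basis X ℂ (MonoidAlgebra ℂ X) :=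
    .ofRepr (MonoidAlgebra.coeffLinearEquiv ℂ)
  have hb : ∀ x, b x = MonoidAlgebra.single x 1 := fun x => rfl
  have hr : ∀ f, b.repr f = f.coeff := fun f => rfl
  rw [LinearMap.trace_eq_matrix_trace ℂ b, Matrix.trace]
  refine Finset.sum_congr rfl fun x _ => ?_
  rw [Matrix.diag_apply, LinearMap.toMatrix_apply, hb, hr, Representation.ofMulAction_single]
  simp [Finsupp.single_apply]

open scoped Classical in
/-- In a commutative group, `g` fixes every point of `C ⧸ H` if `g ∈ H` and none otherwise, so
the permutation character is `[C : H]` times the indicator of `H`. -/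
lemma indicator_mem_charAlgebra (C : Type) [CommGroup C] [Finite C] (H : Subgroup C) :
    (fun g : C => if g ∈ H then (1 : ℂ) else 0) ∈ charAlgebra C := by
  have : Fintype (C ⧸ H) := Fintype.ofFinite _
  have hchar : (FDRep.of (Representation.ofMulAction ℂ C (C ⧸ H))).character ∈ charAlgebra C :=
    Algebra.subset_adjoin ⟨_, rfl⟩
  convert (charAlgebra C).smul_mem hchar ((Fintype.card (C ⧸ H) : ℚ)⁻¹) using 1
  funext g
  have hfix : ∀ x : C ⧸ H, g • x = x ↔ g ∈ H := by
    intro x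
    induction x using QuotientGroup.induction_on with
    | H a =>
      change ((g * a : C) : C ⧸ H) = (a : C ⧸ H) ↔ g ∈ H
      rw [eq_comm, QuotientGroup.eq, mul_comm g a, inv_mul_cancel_left]
  have hval : (FDRep.of (Representation.ofMulAction ℂ C (C ⧸ H))).character g =
      ∑ x : C ⧸ H, if g • x = x then (1 : ℂ) else 0 := by
    convert character_ofMulAction C (C ⧸ H) g
    rfl
  rw [Pi.smul_apply, hval]
  simp only [hfix]
  have hne : (Fintype.card (C ⧸ H) : ℂ) ≠ 0 := Nat.cast_ne_zero.mpr Fintype.card_ne_zero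
  split_ifs <;> simp [Rat.smul_def, hne]

open scoped Classical in
lemma genIndicator_eq_prod (C : Type) [CommGroup C] [Finite C] [Fintype (Subgroup C)] :
    genIndicator C = ∏ H ∈ Finset.univ.filter (fun H : Subgroup C => H ≠ ⊤),
      (1 - fun g : C => if g ∈ H then (1 : ℂ) else 0) := by
  funext g
  rw [Finset.prod_apply, genIndicator]
  split_ifs with hg
  · refine (Finset.prod_eq_one fun H hH => ?_).symm
    have hgH : g ∉ H := fun h => (Finset.mem_filter.mp hH).2
      (top_le_iff.mp (hg ▸ Subgroup.zpowers_le.mpr h))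
    simp [hgH]
  · symm
    apply Finset.prod_eq_zero (Finset.mem_filter.mpr ⟨Finset.mem_univ (Subgroup.zpowers g), hg⟩)
    simp

/-- **Statement 12.** Let `C` be a nontrivial finite cyclic group and `θ_C ∈ Map(C, ℂ)` the
indicator function of the set of generators of `C`.  Then `θ_C` lies in `R(C) ⊗_ℤ ℚ`,
identified with the `ℚ`-span of the characters of finite-dimensional complex
representations of `C` inside `Map(C, ℂ)`; moreover `θ_C` is an idempotent for the
pointwise multiplication. -/
theorem genIndicator_mem_span_and_idem (C : Type) [Group C] [Fintype C] [IsCyclic C]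
    [Nontrivial C] :
    genIndicator C ∈
      Submodule.span ℚ {f : C → ℂ | ∃ V : FDRep ℂ C, f = V.character} ∧
    genIndicator C * genIndicator C = genIndicator C := by
  constructor
  · rw [← mem_charAlgebra_iff]
    let : CommGroup C := IsCyclic.commGroup
    have : Fintype (Subgroup C) := Fintype.ofFinite _
    have hmem : genIndicator C ∈ charAlgebra C := by
      rw [genIndicator_eq_prod C]
      exact Subalgebra.prod_mem _ fun H _ =>
        sub_mem (one_mem _) (indicator_mem_charAlgebra C H)
    exact hmem
  · funext g
    simp [genIndicator]
end
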